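/- With F_j ∈ ℝ^{n×n} real symmetric, V ∈ ℝ^{n×p}, Λ real diagonal, f_j(λ̂_i) ∈ ℝ, V = Q[T; 0] a QR factorization with Q ∈ ℝ^{n×n} orthogonal, T̃_j = T f_j(Λ), R = Σ_{j=1}^k F_j V f_j(Λ), and B_2 ∈ ℝ^{(n−p)×p} the lower block of −Q^T R: the linear system Σ_{j=1}^k X_j T̃_j = B_2 in the unknowns X_j ∈ ℝ^{(n−p)×p} is consistent; equivalently, B_2 T̃† T̃ = B_2, where T̃ = [T̃_1; …; T̃_k] ∈ ℝ^{kp×p} and T̃† is its Moore–Penrose pseudoinverse. -/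

import Mathlib

open Matrix BigOperators

noncomputable section

/-- Frobenius norm of a real matrix. -/
def fnorm {ι κ : Type*} [Fintype ι] [Fintype κ] (A : Matrix ι κ ℝ) : ℝ :=
  Real.sqrt (∑ i, ∑ j, ‖A i j‖ ^ 2)

/-- The four Moore–Penrose conditions for real matrices. -/
def IsMoorePenrose {ι κ : Type*} [Fintype ι] [Fintype κ]
    (A : Matrix ι κ ℝ) (B : Matrix κ ι ℝ) : Prop :=
  A * B * A = A ∧ B * A * B = B ∧ (A * B)ᵀ = A * B ∧ (B * A)ᵀ = B * A

open scoped Classical in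
/-- The Moore–Penrose pseudoinverse (defined by choice; it always exists and is unique). -/
noncomputable def pinv {ι κ : Type*} [Fintype ι] [Fintype κ] (A : Matrix ι κ ℝ) :
    Matrix κ ι ℝ :=
  if h : ∃ B, IsMoorePenrose A B then h.choose else 0

theorem exists_isMoorePenrose {ι κ : Type*} [Fintype ι] [Fintype κ] [DecidableEq κ]
    (A : Matrix ι κ ℝ) : ∃ B, IsMoorePenrose A B := by
  have hM : (Aᵀ * A).IsHermitian := by
    simpa [conjTranspose_eq_transpose_of_trivial] using isHermitian_conjTranspose_mul_self A
  obtain ⟨U, d, hU, hs⟩ : ∃ (U : Matrix κ κ ℝ) (d : κ → ℝ), Uᵀ * U = 1 ∧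
      Aᵀ * A = U * diagonal d * Uᵀ := by
    refine ⟨hM.eigenvectorUnitary, hM.eigenvalues, ?_, ?_⟩
    · have := Unitary.coe_star_mul_self hM.eigenvectorUnitary
      simpa [star_eq_conjTranspose, conjTranspose_eq_transpose_of_trivial] using this
    · have := hM.spectral_theorem
      rw [Unitary.conjStarAlgAut_apply] at this
      simpa [star_eq_conjTranspose, conjTranspose_eq_transpose_of_trivial, Function.comp_def]
        using this
  have key : ∀ a b : κ → ℝ, (U * diagonal a * Uᵀ) * (U * diagonal b * Uᵀ)
      = U * diagonal (fun i => a i * b i) * Uᵀ := by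
    intro a b
    calc _ = U * diagonal a * (Uᵀ * U) * diagonal b * Uᵀ := by simp only [Matrix.mul_assoc]
      _ = _ := by rw [hU, Matrix.mul_one, Matrix.mul_assoc U, diagonal_mul_diagonal]
  have sym : ∀ a : κ → ℝ, (U * diagonal a * Uᵀ)ᵀ = U * diagonal a * Uᵀ := by
    intro a
    simp [Matrix.transpose_mul, Matrix.mul_assoc]
  set P := U * diagonal (fun i => (d i)⁻¹) * Uᵀ with hP
  have hPs : Pᵀ = P := sym _
  have h1 : (Aᵀ * A) * (P * (Aᵀ * A)) = Aᵀ * A := by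
    rw [hs, hP, key, key]
    congr; ext i
    by_cases h : d i = 0 <;> simp [h]
  have h2 : P * (Aᵀ * A) * P = P := by
    rw [hs, hP, key, key]
    congr; ext i
    by_cases h : d i = 0 <;> simp [h]
  have h3 : (P * (Aᵀ * A))ᵀ = P * (Aᵀ * A) := by
    rw [hs, hP, key, sym]
  refine ⟨P * Aᵀ, ?_, ?_, ?_, ?_⟩
  · have h4 : Aᴴ * A * (P * (Aᵀ * A) - 1) = 0 := by
      rw [conjTranspose_eq_transpose_of_trivial, Matrix.mul_sub, h1, Matrix.mul_one, sub_self]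
    rw [conjTranspose_mul_self_mul_eq_zero, Matrix.mul_sub, Matrix.mul_one, sub_eq_zero] at h4
    simpa only [Matrix.mul_assoc] using h4
  · calc _ = P * (Aᵀ * A) * P * Aᵀ := by simp only [Matrix.mul_assoc]
      _ = _ := by rw [h2]
  · simp [Matrix.transpose_mul, hPs, Matrix.mul_assoc]
  · rw [Matrix.mul_assoc, h3]

theorem mul_pinv_mul {ι κ : Type*} [Fintype ι] [Fintype κ] [DecidableEq κ]
    (A : Matrix ι κ ℝ) : A * pinv A * A = A := by
  have h := exists_isMoorePenrose A
  unfold pinv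
  rw [dif_pos h]
  exact h.choose_spec.1

/-- Consistency of the `B₂` equation in the symmetric backward error construction: with
real symmetric `Fⱼ`, `V = Q [T; 0]`, `T̃ⱼ = T fⱼ(Λ)`, `R = ∑ⱼ Fⱼ V fⱼ(Λ)` and `B₂` the
lower block of `-Qᵀ R`, the linear system `∑ⱼ Xⱼ T̃ⱼ = B₂` is consistent; equivalently,
`B₂ T̃† T̃ = B₂`. -/
theorem symmetric_B2_equation_consistent (p q k : ℕ)
    (F : Fin k → Matrix (Fin p ⊕ Fin q) (Fin p ⊕ Fin q) ℝ)
    (hFsym : ∀ j, (F j)ᵀ = F j)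
    (f : Fin k → ℝ → ℝ) (lam : Fin p → ℝ)
    (V : Matrix (Fin p ⊕ Fin q) (Fin p) ℝ)
    (Q : Matrix (Fin p ⊕ Fin q) (Fin p ⊕ Fin q) ℝ) (hQ : Qᵀ * Q = 1)
    (T : Matrix (Fin p) (Fin p) ℝ)
    (hV : V = Q * Matrix.fromRows T 0)
    (Tt : Fin k → Matrix (Fin p) (Fin p) ℝ)
    (hTt : ∀ j, Tt j = T * Matrix.diagonal fun i => f j (lam i))
    (Ttil : Matrix (Fin k × Fin p) (Fin p) ℝ)
    (hTtil : ∀ j s t, Ttil (j, s) t = Tt j s t)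
    (R : Matrix (Fin p ⊕ Fin q) (Fin p) ℝ)
    (hR : R = ∑ j, F j * V * Matrix.diagonal fun i => f j (lam i))
    (B2 : Matrix (Fin q) (Fin p) ℝ) (hB2 : ∀ m t, B2 m t = -((Qᵀ * R) (Sum.inr m) t)) :
    (∃ X : Fin k → Matrix (Fin q) (Fin p) ℝ, (∑ j, X j * Tt j) = B2) ∧
    B2 * pinv Ttil * Ttil = B2 := by
  have hV2 : V = Q * (fromRows T 0 : Matrix (Fin p ⊕ Fin q) (Fin p) ℝ) := hV
  have hX : (∑ j, (-(Qᵀ * F j * Q).toBlocks₂₁) * Tt j) = B2 := by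
    ext m t
    have e : Qᵀ * R = ∑ j, (Qᵀ * F j * Q) * (fromRows (Tt j) 0 : Matrix (Fin p ⊕ Fin q) (Fin p) ℝ) := by
      rw [hR, Matrix.mul_sum]
      refine Finset.sum_congr rfl fun j _ => ?_
      have : fromRows (Tt j) (0 : Matrix (Fin q) (Fin p) ℝ)
          = (fromRows T 0 : Matrix (Fin p ⊕ Fin q) (Fin p) ℝ) * Matrix.diagonal fun i => f j (lam i) := by
        rw [fromRows_mul, hTt, Matrix.zero_mul]
      rw [this, hV2]
      simp only [Matrix.mul_assoc]
    rw [hB2, e]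
    simp only [Matrix.sum_apply, Matrix.neg_mul, Matrix.neg_apply, Finset.sum_neg_distrib]
    congr 1
    refine Finset.sum_congr rfl fun j _ => ?_
    generalize Qᵀ * F j * Q = G
    rw [Matrix.mul_apply, Matrix.mul_apply, Fintype.sum_sum_type]
    simp [toBlocks₂₁]
  refine ⟨⟨_, hX⟩, ?_⟩
  obtain ⟨Y, hY⟩ : ∃ Y : Matrix (Fin q) (Fin k × Fin p) ℝ, Y * Ttil = B2 := by
    refine ⟨Matrix.of fun m js => (-(Qᵀ * F js.1 * Q).toBlocks₂₁) m js.2, ?_⟩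
    rw [← hX]
    ext m t
    rw [Matrix.mul_apply, Fintype.sum_prod_type, Matrix.sum_apply]
    refine Finset.sum_congr rfl fun j _ => ?_
    rw [Matrix.mul_apply]
    refine Finset.sum_congr rfl fun s _ => ?_
    rw [hTtil, Matrix.of_apply]
  rw [← hY, Matrix.mul_assoc, Matrix.mul_assoc, ← Matrix.mul_assoc Ttil, mul_pinv_mul]
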